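/- For each n ≥ 1, there exists no provability predicate PR_T(x) of T such that the modal formula □ⁿp → p belongs to PL(PR_T). -/

import Mathlib

namespace PLN

/-! ### Modal formulas and the logics N⁺A_{m,n} -/

/-- Formulas of modal propositional logic. -/
inductive MFml : Type
  | var : ℕ → MFml
  | bot : MFml
  | neg : MFml → MFml
  | and : MFml → MFml → MFml
  | or : MFml → MFml → MFml
  | imp : MFml → MFml → MFml
  | box : MFml → MFml
  deriving DecidableEq

/-- `boxIter n A` is `□ⁿ A`, where `□⁰ A = A` and `□^(k+1) A = □ (□ᵏ A)`. -/
def boxIter : ℕ → MFml → MFml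
  | 0, A => A
  | k + 1, A => .box (boxIter k A)

/-- Evaluation of a modal formula under a valuation of its "propositional atoms"
(propositional variables, and boxed formulas); used to define propositional tautologies
in the modal language. -/
def MFml.evalTC (v : MFml → Prop) : MFml → Prop
  | .bot => False
  | .neg A => ¬ A.evalTC v
  | .and A B => A.evalTC v ∧ B.evalTC v
  | .or A B => A.evalTC v ∨ B.evalTC v
  | .imp A B => A.evalTC v → B.evalTC v
  | A => v A

/-- Propositional tautologies in the modal language. -/
def MTaut (A : MFml) : Prop := ∀ v, A.evalTC v

/-- Provability in the logic `N⁺A_{m,n}`: the pure logic of necessitation `N`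
(propositional tautologies, modus ponens, necessitation) together with the axiom scheme
`□ⁿA → □ᵐA` and the rule `Ros□` (from `¬□A` infer `¬□□A`). -/
inductive NAProves (m n : ℕ) : MFml → Prop
  | taut {A} : MTaut A → NAProves m n A
  | acc (A) : NAProves m n (.imp (boxIter n A) (boxIter m A))
  | mp {A B} : NAProves m n (.imp A B) → NAProves m n A → NAProves m n B
  | nec {A} : NAProves m n A → NAProves m n (.box A)
  | ros {A} : NAProves m n (.neg (.box A)) → NAProves m n (.neg (.box (.box A)))

/-- `IsSub B A` : `B` is a subformula of `A`. -/
inductive IsSub : MFml → MFml → Prop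
  | refl (A) : IsSub A A
  | neg {B A} : IsSub B A → IsSub B (.neg A)
  | andL {B A C} : IsSub B A → IsSub B (.and A C)
  | andR {B A C} : IsSub B C → IsSub B (.and A C)
  | orL {B A C} : IsSub B A → IsSub B (.or A C)
  | orR {B A C} : IsSub B C → IsSub B (.or A C)
  | impL {B A C} : IsSub B A → IsSub B (.imp A C)
  | impR {B A C} : IsSub B C → IsSub B (.imp A C)
  | box {B A} : IsSub B A → IsSub B (.box A)

/-! ### N-frames and N-models -/

/-- An N-model on a set `W` of worlds: an N-frame (a binary relation `≺_B` on `W`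
for each modal formula `B`) together with a valuation of propositional variables. -/
structure NModel (W : Type) where
  rel : MFml → W → W → Prop
  val : W → ℕ → Prop

/-- The forcing relation of an N-model:
`x ⊩ □B` iff every `y` with `x ≺_B y` satisfies `y ⊩ B`. -/
def NModel.Forces {W : Type} (M : NModel W) : W → MFml → Prop
  | x, .var p => M.val x p
  | _, .bot => False
  | x, .neg A => ¬ NModel.Forces M x A
  | x, .and A B => NModel.Forces M x A ∧ NModel.Forces M x B
  | x, .or A B => NModel.Forces M x A ∨ NModel.Forces M x B
  | x, .imp A B => NModel.Forces M x A → NModel.Forces M x B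
  | x, .box A => ∀ y, M.rel A x y → NModel.Forces M y A

/-- The relations `≺_B^k` : `x ≺_B^0 y` iff `x = y`, and
`x ≺_B^(k+1) y` iff `∃ w, x ≺_{□ᵏB} w` and `w ≺_B^k y`. -/
def NModel.relIter {W : Type} (M : NModel W) (B : MFml) : ℕ → W → W → Prop
  | 0, x, y => x = y
  | k + 1, x, y => ∃ w, M.rel (boxIter k B) x w ∧ NModel.relIter M B k w y

/-- `(m,n)`-accessibility of (the frame of) an N-model. -/
def NModel.Accessible {W : Type} (M : NModel W) (m n : ℕ) : Prop :=
  ∀ (B : MFml) (x y : W), NModel.relIter M B m x y → NModel.relIter M B n x y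

/-! ### The language of first-order arithmetic -/

/-- Terms of the language of arithmetic, with de Bruijn variables. -/
inductive ATerm : Type
  | var : ℕ → ATerm
  | zero : ATerm
  | succ : ATerm → ATerm
  | add : ATerm → ATerm → ATerm
  | mul : ATerm → ATerm → ATerm
  deriving DecidableEq

/-- Formulas of the language of arithmetic (with `≤` primitive), de Bruijn variables. -/
inductive AFml : Type
  | eq : ATerm → ATerm → AFml
  | le : ATerm → ATerm → AFml
  | neg : AFml → AFml
  | and : AFml → AFml → AFml
  | or : AFml → AFml → AFml
  | imp : AFml → AFml → AFml
  | all : AFml → AFml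
  | ex : AFml → AFml
  deriving DecidableEq

/-- Lift (shift up by one) the variables `≥ c` of a term. -/
def ATerm.lift (c : ℕ) : ATerm → ATerm
  | .var n => .var (if n < c then n else n + 1)
  | .zero => .zero
  | .succ t => .succ (t.lift c)
  | .add t s => .add (t.lift c) (s.lift c)
  | .mul t s => .mul (t.lift c) (s.lift c)

/-- Simultaneous substitution in terms. -/
def ATerm.substAll (σ : ℕ → ATerm) : ATerm → ATerm
  | .var n => σ n
  | .zero => .zero
  | .succ t => .succ (t.substAll σ)
  | .add t s => .add (t.substAll σ) (s.substAll σ)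
  | .mul t s => .mul (t.substAll σ) (s.substAll σ)

/-- Pushing a substitution under a binder. -/
def liftSub (σ : ℕ → ATerm) : ℕ → ATerm
  | 0 => .var 0
  | n + 1 => (σ n).lift 0

/-- Lift (shift up by one) the free variables `≥ c` of a formula. -/
def AFml.lift (c : ℕ) : AFml → AFml
  | .eq t s => .eq (t.lift c) (s.lift c)
  | .le t s => .le (t.lift c) (s.lift c)
  | .neg φ => .neg (φ.lift c)
  | .and φ ψ => .and (φ.lift c) (ψ.lift c)
  | .or φ ψ => .or (φ.lift c) (ψ.lift c)
  | .imp φ ψ => .imp (φ.lift c) (ψ.lift c)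
  | .all φ => .all (φ.lift (c + 1))
  | .ex φ => .ex (φ.lift (c + 1))

/-- Simultaneous (capture-avoiding) substitution in formulas. -/
def AFml.substAll (σ : ℕ → ATerm) : AFml → AFml
  | .eq t s => .eq (t.substAll σ) (s.substAll σ)
  | .le t s => .le (t.substAll σ) (s.substAll σ)
  | .neg φ => .neg (φ.substAll σ)
  | .and φ ψ => .and (φ.substAll σ) (ψ.substAll σ)
  | .or φ ψ => .or (φ.substAll σ) (ψ.substAll σ)
  | .imp φ ψ => .imp (φ.substAll σ) (ψ.substAll σ)
  | .all φ => .all (φ.substAll (liftSub σ))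
  | .ex φ => .ex (φ.substAll (liftSub σ))

def subst0Env (t : ATerm) : ℕ → ATerm
  | 0 => t
  | n + 1 => .var n

def subst2Env (t s : ATerm) : ℕ → ATerm
  | 0 => t
  | 1 => s
  | n + 2 => .var n

/-- Substitute the term `t` for the free variable `0` (decrementing other variables). -/
def AFml.subst0 (φ : AFml) (t : ATerm) : AFml := φ.substAll (subst0Env t)

/-- Substitute the terms `t`, `s` for the free variables `0`, `1` simultaneously. -/
def AFml.subst2 (φ : AFml) (t s : ATerm) : AFml := φ.substAll (subst2Env t s)

/-- Substitute `S(var 0)` for `var 0`, leaving all other free variables unchanged. -/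
def succSubst (φ : AFml) : AFml :=
  φ.substAll fun n => if n = 0 then .succ (.var 0) else .var n

/-- All variables of a term are `< c`. -/
def ATerm.FreeLt (c : ℕ) : ATerm → Prop
  | .var n => n < c
  | .zero => True
  | .succ t => t.FreeLt c
  | .add t s => t.FreeLt c ∧ s.FreeLt c
  | .mul t s => t.FreeLt c ∧ s.FreeLt c

/-- All free variables of a formula are `< c`; `FreeLt 0 φ` says that `φ` is a sentence. -/
def AFml.FreeLt (c : ℕ) : AFml → Prop
  | .eq t s => t.FreeLt c ∧ s.FreeLt c
  | .le t s => t.FreeLt c ∧ s.FreeLt c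
  | .neg φ => φ.FreeLt c
  | .and φ ψ => φ.FreeLt c ∧ ψ.FreeLt c
  | .or φ ψ => φ.FreeLt c ∧ ψ.FreeLt c
  | .imp φ ψ => φ.FreeLt c ∧ ψ.FreeLt c
  | .all φ => φ.FreeLt (c + 1)
  | .ex φ => φ.FreeLt (c + 1)

/-- The numeral `n̄`. -/
def numeral : ℕ → ATerm
  | 0 => .zero
  | n + 1 => .succ (numeral n)

/-- A Gödel numbering of terms. -/
def ATerm.code : ATerm → ℕ
  | .var n => Nat.pair 0 n
  | .zero => Nat.pair 1 0
  | .succ t => Nat.pair 2 t.code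
  | .add t s => Nat.pair 3 (Nat.pair t.code s.code)
  | .mul t s => Nat.pair 4 (Nat.pair t.code s.code)

/-- A Gödel numbering of formulas. -/
def AFml.code : AFml → ℕ
  | .eq t s => Nat.pair 0 (Nat.pair t.code s.code)
  | .le t s => Nat.pair 1 (Nat.pair t.code s.code)
  | .neg φ => Nat.pair 2 φ.code
  | .and φ ψ => Nat.pair 3 (Nat.pair φ.code ψ.code)
  | .or φ ψ => Nat.pair 4 (Nat.pair φ.code ψ.code)
  | .imp φ ψ => Nat.pair 5 (Nat.pair φ.code ψ.code)
  | .all φ => Nat.pair 6 φ.code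
  | .ex φ => Nat.pair 7 φ.code

/-- `⌜φ⌝`, the numeral of the Gödel number of `φ`. -/
def gnum (φ : AFml) : ATerm := numeral φ.code

/-- For a formula `P(x)` (with free variable `var 0`), `P.appNum φ` is `P(⌜φ⌝)`. -/
def AFml.appNum (P φ : AFml) : AFml := P.subst0 (gnum φ)

/-- Iterated application of a predicate: `iterPred P k φ = P(⌜P(⌜⋯P(⌜φ⌝)⋯⌝)⌝)` (`k` times). -/
def iterPred (P : AFml) : ℕ → AFml → AFml
  | 0, φ => φ
  | k + 1, φ => P.appNum (iterPred P k φ)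

/-! ### Satisfaction in the standard model -/

def ATerm.val (ρ : ℕ → ℕ) : ATerm → ℕ
  | .var n => ρ n
  | .zero => 0
  | .succ t => t.val ρ + 1
  | .add t s => t.val ρ + s.val ρ
  | .mul t s => t.val ρ * s.val ρ

def consEnv (a : ℕ) (ρ : ℕ → ℕ) : ℕ → ℕ
  | 0 => a
  | n + 1 => ρ n

/-- Satisfaction in the standard model `ℕ` under an environment `ρ`. -/
def AFml.Sat (ρ : ℕ → ℕ) : AFml → Prop
  | .eq t s => t.val ρ = s.val ρ
  | .le t s => t.val ρ ≤ s.val ρ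
  | .neg φ => ¬ φ.Sat ρ
  | .and φ ψ => φ.Sat ρ ∧ ψ.Sat ρ
  | .or φ ψ => φ.Sat ρ ∨ ψ.Sat ρ
  | .imp φ ψ => φ.Sat ρ → ψ.Sat ρ
  | .all φ => ∀ a, φ.Sat (consEnv a ρ)
  | .ex φ => ∃ a, φ.Sat (consEnv a ρ)

/-- `ℕ ⊨ φ`. -/
def TrueN (φ : AFml) : Prop := φ.Sat fun _ => 0

/-! ### The arithmetical hierarchy: Δ₀, Σ₁, Π₁ -/

/-- `Δ₀` formulas: every quantifier is bounded. -/
inductive IsDelta0 : AFml → Prop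
  | eq (t s : ATerm) : IsDelta0 (.eq t s)
  | le (t s : ATerm) : IsDelta0 (.le t s)
  | neg {φ} : IsDelta0 φ → IsDelta0 (.neg φ)
  | and {φ ψ} : IsDelta0 φ → IsDelta0 ψ → IsDelta0 (.and φ ψ)
  | or {φ ψ} : IsDelta0 φ → IsDelta0 ψ → IsDelta0 (.or φ ψ)
  | imp {φ ψ} : IsDelta0 φ → IsDelta0 ψ → IsDelta0 (.imp φ ψ)
  | ball {φ : AFml} (t : ATerm) : IsDelta0 φ → IsDelta0 (.all (.imp (.le (.var 0) (ATerm.lift 0 t)) φ))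
  | bex {φ : AFml} (t : ATerm) : IsDelta0 φ → IsDelta0 (.ex (.and (.le (.var 0) (ATerm.lift 0 t)) φ))

mutual
  /-- `Σ₁` formulas. -/
  inductive IsSigma1 : AFml → Prop
    | delta0 {φ} : IsDelta0 φ → IsSigma1 φ
    | and {φ ψ} : IsSigma1 φ → IsSigma1 ψ → IsSigma1 (.and φ ψ)
    | or {φ ψ} : IsSigma1 φ → IsSigma1 ψ → IsSigma1 (.or φ ψ)
    | ex {φ} : IsSigma1 φ → IsSigma1 (.ex φ)
    | negPi {φ} : IsPi1 φ → IsSigma1 (.neg φ)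
    | impPiSigma {φ ψ} : IsPi1 φ → IsSigma1 ψ → IsSigma1 (.imp φ ψ)
  /-- `Π₁` formulas. -/
  inductive IsPi1 : AFml → Prop
    | delta0 {φ} : IsDelta0 φ → IsPi1 φ
    | and {φ ψ} : IsPi1 φ → IsPi1 ψ → IsPi1 (.and φ ψ)
    | or {φ ψ} : IsPi1 φ → IsPi1 ψ → IsPi1 (.or φ ψ)
    | all {φ} : IsPi1 φ → IsPi1 (.all φ)
    | negSigma {φ} : IsSigma1 φ → IsPi1 (.neg φ)
    | impSigmaPi {φ ψ} : IsSigma1 φ → IsPi1 ψ → IsPi1 (.imp φ ψ)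
end

/-! ### A Hilbert-style proof system for first-order arithmetic -/

/-- Evaluation of an arithmetical formula under a valuation of its "propositionally atomic"
subformulas (atomic or quantified formulas); used for propositional tautologies and
tautological consequence. -/
def AFml.evalProp (v : AFml → Prop) : AFml → Prop
  | .neg φ => ¬ φ.evalProp v
  | .and φ ψ => φ.evalProp v ∧ ψ.evalProp v
  | .or φ ψ => φ.evalProp v ∨ ψ.evalProp v
  | .imp φ ψ => φ.evalProp v → ψ.evalProp v
  | φ => v φ

/-- Propositional tautologies in the language of arithmetic. -/
def ATaut (φ : AFml) : Prop := ∀ v, φ.evalProp v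

/-- `φ` is a tautological consequence of the set `X` of formulas. -/
def TC (X : Set AFml) (φ : AFml) : Prop :=
  ∀ v : AFml → Prop, (∀ ψ ∈ X, ψ.evalProp v) → φ.evalProp v

def iffF (φ ψ : AFml) : AFml := .and (.imp φ ψ) (.imp ψ φ)

/-- Hilbert-style provability from the set of axioms `Γ` in classical first-order
logic with equality. -/
inductive Proves (Γ : Set AFml) : AFml → Prop
  | ax {φ} : φ ∈ Γ → Proves Γ φ
  | taut {φ} : ATaut φ → Proves Γ φ
  | mp {φ ψ} : Proves Γ (.imp φ ψ) → Proves Γ φ → Proves Γ ψ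
  | allE (φ : AFml) (t : ATerm) : Proves Γ (.imp (.all φ) (φ.subst0 t))
  | exI (φ : AFml) (t : ATerm) : Proves Γ (.imp (φ.subst0 t) (.ex φ))
  | allImp (φ ψ : AFml) : Proves Γ (.imp (.all (.imp φ ψ)) (.imp (.all φ) (.all ψ)))
  | vacAll (φ : AFml) : Proves Γ (.imp φ (.all (AFml.lift 0 φ)))
  | exDef (φ : AFml) : Proves Γ (iffF (.ex φ) (.neg (.all (.neg φ))))
  | gen {φ} : Proves Γ φ → Proves Γ (.all φ)
  | eqRefl (t : ATerm) : Proves Γ (.eq t t)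
  | eqSubst (φ : AFml) (t s : ATerm) : Proves Γ (.imp (.eq t s) (.imp (φ.subst0 t) (φ.subst0 s)))

/-! ### Peano arithmetic -/

/-- The axioms of Peano arithmetic. -/
inductive PAax : AFml → Prop
  | succNeZero : PAax (.all (.neg (.eq (.succ (.var 0)) .zero)))
  | succInj :
      PAax (.all (.all (.imp (.eq (.succ (.var 1)) (.succ (.var 0))) (.eq (.var 1) (.var 0)))))
  | addZero : PAax (.all (.eq (.add (.var 0) .zero) (.var 0)))
  | addSucc :
      PAax (.all (.all (.eq (.add (.var 1) (.succ (.var 0))) (.succ (.add (.var 1) (.var 0))))))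
  | mulZero : PAax (.all (.eq (.mul (.var 0) .zero) .zero))
  | mulSucc :
      PAax (.all (.all (.eq (.mul (.var 1) (.succ (.var 0)))
        (.add (.mul (.var 1) (.var 0)) (.var 1)))))
  | leDef :
      PAax (.all (.all (iffF (.le (.var 1) (.var 0))
        (.ex (.eq (.add (.var 0) (.var 2)) (.var 1))))))
  | ind (φ : AFml) :
      PAax (.imp (.and (φ.subst0 .zero) (.all (.imp φ (succSubst φ)))) (.all φ))

/-- Peano arithmetic, as a set of axioms. -/
def PA : Set AFml := {φ | PAax φ}

/-- The sentence `0 = 1`. -/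
def botFml : AFml := .eq .zero (.succ .zero)

/-- `t < s`, as the formula `S(t) ≤ s`. -/
def ltF (t s : ATerm) : AFml := .le (.succ t) s

/-- `Δ₁(PA)` formulas: `Σ₁` formulas which are `PA`-provably equivalent to a `Π₁` formula. -/
def IsDelta1PA (φ : AFml) : Prop :=
  IsSigma1 φ ∧ ∃ ψ, IsPi1 ψ ∧ Proves PA (iffF φ ψ)

/-! ### Theories, provability predicates, arithmetical interpretations -/

/-- `Tax` is primitive recursively axiomatized (via the Gödel numbering). -/
def PrAxiomatized (Tax : Set AFml) : Prop :=
  ∃ p : ℕ → Bool, Primrec p ∧ ∀ φ : AFml, φ ∈ Tax ↔ p φ.code = true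

/-- `Σ₁`-soundness: every `T`-provable `Σ₁` sentence is true in `ℕ`. -/
def Sigma1Sound (Tax : Set AFml) : Prop :=
  ∀ φ : AFml, IsSigma1 φ → φ.FreeLt 0 → Proves Tax φ → TrueN φ

/-- `P` is a provability predicate of `T`: a formula `P(x)` with at most the free
variable `x` such that for every formula `φ`, `T ⊢ φ` iff `PA ⊢ P(⌜φ⌝)`. -/
def IsProvPred (Tax : Set AFml) (P : AFml) : Prop :=
  P.FreeLt 1 ∧ ∀ φ : AFml, Proves Tax φ ↔ Proves PA (P.appNum φ)

/-- `f` is an arithmetical interpretation based on the predicate `P`. -/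
def IsInterp (P : AFml) (f : MFml → AFml) : Prop :=
  (∀ i, (f (.var i)).FreeLt 0) ∧
  f .bot = botFml ∧
  (∀ A, f (.neg A) = .neg (f A)) ∧
  (∀ A B, f (.and A B) = .and (f A) (f B)) ∧
  (∀ A B, f (.or A B) = .or (f A) (f B)) ∧
  (∀ A B, f (.imp A B) = .imp (f A) (f B)) ∧
  (∀ A, f (.box A) = P.appNum (f A))

/-- The provability logic of the predicate `P` (relative to the theory `Tax`). -/
def PL (Tax : Set AFml) (P : AFml) : Set MFml :=
  {A | ∀ f : MFml → AFml, IsInterp P f → Proves Tax (f A)}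

/-- The formulas with a `T`-proof of code `≤ s` (relative to a proof enumeration `prf`). -/
def PTset (prf : ℕ → Option AFml) (s : ℕ) : Set AFml :=
  {φ | ∃ y ≤ s, prf y = some φ}

/-! ### Substitution lemmas -/

theorem tsub_sub (t : ATerm) (σ τ : ℕ → ATerm) :
    (t.substAll σ).substAll τ = t.substAll (fun n => (σ n).substAll τ) := by
  induction t <;> simp_all [ATerm.substAll]

theorem tlift_eq (t : ATerm) (c : ℕ) :
    t.lift c = t.substAll (fun n => .var (if n < c then n else n + 1)) := by
  induction t <;> simp_all [ATerm.substAll, ATerm.lift]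

theorem tsub_id (t : ATerm) : t.substAll .var = t := by
  induction t <;> simp_all [ATerm.substAll]

theorem tsub_congr {c : ℕ} {σ τ : ℕ → ATerm} (h : ∀ n < c, σ n = τ n) (t : ATerm)
    (ht : t.FreeLt c) : t.substAll σ = t.substAll τ := by
  induction t <;> simp_all [ATerm.substAll, ATerm.FreeLt]

theorem tlift_sub (t : ATerm) (τ : ℕ → ATerm) :
    (t.lift 0).substAll (liftSub τ) = (t.substAll τ).lift 0 := by
  rw [tlift_eq, tlift_eq, tsub_sub, tsub_sub]
  congr 1; funext n
  simp [ATerm.substAll, liftSub, tlift_eq]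

theorem liftSub_comp (σ τ : ℕ → ATerm) :
    (fun n => (liftSub σ n).substAll (liftSub τ)) = liftSub (fun n => (σ n).substAll τ) := by
  funext n
  cases n with
  | zero => rfl
  | succ n => simp [liftSub, tlift_sub]

theorem liftSub_var : liftSub .var = .var := by
  funext n
  cases n <;> simp [liftSub, ATerm.lift]

theorem sub_sub (φ : AFml) : ∀ (σ τ : ℕ → ATerm),
    (φ.substAll σ).substAll τ = φ.substAll (fun n => (σ n).substAll τ) := by
  induction φ <;> intro σ τ <;> simp_all [AFml.substAll, tsub_sub, liftSub_comp]

theorem sub_id (φ : AFml) : φ.substAll .var = φ := by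
  induction φ <;> simp_all [AFml.substAll, tsub_id, liftSub_var]

theorem sub_congr (φ : AFml) : ∀ {c : ℕ} {σ τ : ℕ → ATerm}, (∀ n < c, σ n = τ n) →
    φ.FreeLt c → φ.substAll σ = φ.substAll τ := by
  have key : ∀ {c : ℕ} {σ τ : ℕ → ATerm}, (∀ n < c, σ n = τ n) →
      ∀ n < c + 1, liftSub σ n = liftSub τ n := by
    intro c σ τ h n hn
    cases n with
    | zero => rfl
    | succ n => simp [liftSub, h n (by omega)]
  induction φ with
  | eq t s => intro c σ τ h hf; simp [AFml.substAll, tsub_congr h _ hf.1, tsub_congr h _ hf.2]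
  | le t s => intro c σ τ h hf; simp [AFml.substAll, tsub_congr h _ hf.1, tsub_congr h _ hf.2]
  | neg φ ih => intro c σ τ h hf; simp only [AFml.substAll, ih h hf]
  | and φ ψ ih1 ih2 => intro c σ τ h hf; simp only [AFml.substAll, ih1 h hf.1, ih2 h hf.2]
  | or φ ψ ih1 ih2 => intro c σ τ h hf; simp only [AFml.substAll, ih1 h hf.1, ih2 h hf.2]
  | imp φ ψ ih1 ih2 => intro c σ τ h hf; simp only [AFml.substAll, ih1 h hf.1, ih2 h hf.2]
  | all φ ih => intro c σ τ h hf; simp only [AFml.substAll, ih (key h) hf]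
  | ex φ ih => intro c σ τ h hf; simp only [AFml.substAll, ih (key h) hf]

theorem liftSub_ren (c : ℕ) :
    liftSub (fun n => .var (if n < c then n else n + 1)) =
      (fun n => .var (if n < c + 1 then n else n + 1)) := by
  funext n
  cases n with
  | zero => simp [liftSub]
  | succ n =>
    simp only [liftSub, ATerm.lift, ATerm.var.injEq]
    split_ifs <;> omega

theorem lift_eq (φ : AFml) : ∀ c : ℕ,
    φ.lift c = φ.substAll (fun n => .var (if n < c then n else n + 1)) := by
  induction φ <;> intro c <;> simp_all [AFml.substAll, AFml.lift, tlift_eq, liftSub_ren]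

theorem lift0_eq (φ : AFml) : φ.lift 0 = φ.substAll (fun n => .var (n + 1)) := by
  rw [lift_eq]; simp

theorem tfree_sub {c c' : ℕ} {σ : ℕ → ATerm} (h : ∀ n < c, (σ n).FreeLt c') (t : ATerm)
    (ht : t.FreeLt c) : (t.substAll σ).FreeLt c' := by
  induction t <;> simp_all [ATerm.substAll, ATerm.FreeLt]

theorem tfree_lift {c : ℕ} (t : ATerm) (ht : t.FreeLt c) : (t.lift 0).FreeLt (c + 1) := by
  rw [tlift_eq]
  exact tfree_sub (fun n hn => by simp [ATerm.FreeLt, hn]) t ht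

theorem free_sub (φ : AFml) : ∀ {c c' : ℕ} {σ : ℕ → ATerm}, (∀ n < c, (σ n).FreeLt c') →
    φ.FreeLt c → (φ.substAll σ).FreeLt c' := by
  have key : ∀ {c c' : ℕ} {σ : ℕ → ATerm}, (∀ n < c, (σ n).FreeLt c') →
      ∀ n < c + 1, (liftSub σ n).FreeLt (c' + 1) := by
    intro c c' σ h n hn
    cases n with
    | zero => simp [liftSub, ATerm.FreeLt]
    | succ n => exact tfree_lift _ (h n (by omega))
  induction φ with
  | eq t s => intro c c' σ h hf; exact ⟨tfree_sub h _ hf.1, tfree_sub h _ hf.2⟩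
  | le t s => intro c c' σ h hf; exact ⟨tfree_sub h _ hf.1, tfree_sub h _ hf.2⟩
  | neg φ ih => intro c c' σ h hf; exact ih h hf
  | and φ ψ ih1 ih2 => intro c c' σ h hf; exact ⟨ih1 h hf.1, ih2 h hf.2⟩
  | or φ ψ ih1 ih2 => intro c c' σ h hf; exact ⟨ih1 h hf.1, ih2 h hf.2⟩
  | imp φ ψ ih1 ih2 => intro c c' σ h hf; exact ⟨ih1 h hf.1, ih2 h hf.2⟩
  | all φ ih => intro c c' σ h hf; exact ih (key h) hf
  | ex φ ih => intro c c' σ h hf; exact ih (key h) hf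

/-- Every formula has finitely many free variables; substituting closed terms for the
variables `≥ c` yields a formula with free variables `< c`. -/
theorem tfree_trunc {c : ℕ} {σ : ℕ → ATerm} (h : ∀ n, (σ n).FreeLt c) (t : ATerm) :
    (t.substAll σ).FreeLt c := by
  induction t <;> simp_all [ATerm.substAll, ATerm.FreeLt]

theorem free_trunc (φ : AFml) : ∀ {c : ℕ} {σ : ℕ → ATerm}, (∀ n, (σ n).FreeLt c) →
    (φ.substAll σ).FreeLt c := by
  have key : ∀ {c' : ℕ} {σ : ℕ → ATerm}, (∀ n, (σ n).FreeLt c') →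
      ∀ n, (liftSub σ n).FreeLt (c' + 1) := by
    intro c' σ h n
    cases n with
    | zero => simp [liftSub, ATerm.FreeLt]
    | succ n => exact tfree_lift _ (h n)
  induction φ with
  | eq t s => intro c σ h; exact ⟨tfree_trunc h _, tfree_trunc h _⟩
  | le t s => intro c σ h; exact ⟨tfree_trunc h _, tfree_trunc h _⟩
  | neg φ ih => intro c σ h; exact ih h
  | and φ ψ ih1 ih2 => intro c σ h; exact ⟨ih1 h, ih2 h⟩
  | or φ ψ ih1 ih2 => intro c σ h; exact ⟨ih1 h, ih2 h⟩
  | imp φ ψ ih1 ih2 => intro c σ h; exact ⟨ih1 h, ih2 h⟩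
  | all φ ih => intro c σ h; exact ih (key h)
  | ex φ ih => intro c σ h; exact ih (key h)

@[simp] theorem num_sub (n : ℕ) (σ : ℕ → ATerm) : (numeral n).substAll σ = numeral n := by
  induction n <;> simp_all [numeral, ATerm.substAll]

@[simp] theorem num_lift (n : ℕ) (c : ℕ) : (numeral n).lift c = numeral n := by
  induction n <;> simp_all [numeral, ATerm.lift]

theorem num_free (n c : ℕ) : (numeral n).FreeLt c := by
  induction n <;> simp_all [numeral, ATerm.FreeLt]

@[simp] theorem num_val (n : ℕ) (ρ : ℕ → ℕ) : (numeral n).val ρ = n := by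
  induction n <;> simp_all [numeral, ATerm.val]

@[simp] theorem tlift_sub0 (t s : ATerm) : (t.lift 0).substAll (subst0Env s) = t := by
  rw [tlift_eq, tsub_sub]
  conv_rhs => rw [← tsub_id t]
  congr 1

theorem lift_sub0 (φ : AFml) (s : ATerm) : (φ.lift 0).subst0 s = φ := by
  rw [lift0_eq, AFml.subst0, sub_sub]
  conv_rhs => rw [← sub_id φ]
  congr 1

theorem lift_closed {φ : AFml} (h : φ.FreeLt 0) : φ.lift 0 = φ := by
  rw [lift0_eq]
  conv_rhs => rw [← sub_id φ]
  exact sub_congr φ (by simp) h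

/-! ### Semantics of substitution, and definability -/

theorem val_sub (t : ATerm) (σ : ℕ → ATerm) (ρ : ℕ → ℕ) :
    (t.substAll σ).val ρ = t.val (fun n => (σ n).val ρ) := by
  induction t <;> simp_all [ATerm.substAll, ATerm.val]

theorem val_lift (t : ATerm) (a : ℕ) (ρ : ℕ → ℕ) : (t.lift 0).val (consEnv a ρ) = t.val ρ := by
  rw [tlift_eq, val_sub]
  congr 1

theorem sat_sub (φ : AFml) : ∀ (σ : ℕ → ATerm) (ρ : ℕ → ℕ),
    (φ.substAll σ).Sat ρ ↔ φ.Sat (fun n => (σ n).val ρ) := by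
  have key : ∀ (σ : ℕ → ATerm) (ρ : ℕ → ℕ) (a : ℕ),
      (fun n => (liftSub σ n).val (consEnv a ρ)) = consEnv a (fun n => (σ n).val ρ) := by
    intro σ ρ a
    funext n
    cases n with
    | zero => rfl
    | succ n => exact val_lift _ _ _
  induction φ <;> intro σ ρ <;> simp_all [AFml.substAll, AFml.Sat, val_sub]

theorem delta0_sub {φ : AFml} (h : IsDelta0 φ) : ∀ σ : ℕ → ATerm, IsDelta0 (φ.substAll σ) := by
  induction h with
  | eq t s => intro σ; exact .eq _ _
  | le t s => intro σ; exact .le _ _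
  | neg _ ih => intro σ; exact .neg (ih σ)
  | and _ _ ih1 ih2 => intro σ; exact .and (ih1 σ) (ih2 σ)
  | or _ _ ih1 ih2 => intro σ; exact .or (ih1 σ) (ih2 σ)
  | imp _ _ ih1 ih2 => intro σ; exact .imp (ih1 σ) (ih2 σ)
  | ball t _ ih =>
    intro σ
    simp only [AFml.substAll, tlift_sub]
    exact .ball _ (ih _)
  | bex t _ ih =>
    intro σ
    simp only [AFml.substAll, tlift_sub]
    exact .bex _ (ih _)

/-- A relation on environments is `Δ₀`-definable. -/
def D0 (R : (ℕ → ℕ) → Prop) : Prop := ∃ φ, IsDelta0 φ ∧ ∀ ρ, φ.Sat ρ ↔ R ρ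

theorem D0.congr {R S : (ℕ → ℕ) → Prop} (h : D0 R) (hs : ∀ ρ, S ρ ↔ R ρ) : D0 S := by
  obtain ⟨φ, h1, h2⟩ := h
  exact ⟨φ, h1, fun ρ => (h2 ρ).trans (hs ρ).symm⟩

theorem D0.eq (t s : ATerm) : D0 (fun ρ => t.val ρ = s.val ρ) :=
  ⟨_, .eq t s, fun _ => Iff.rfl⟩

theorem D0.le (t s : ATerm) : D0 (fun ρ => t.val ρ ≤ s.val ρ) :=
  ⟨_, .le t s, fun _ => Iff.rfl⟩

theorem D0.and {R S : (ℕ → ℕ) → Prop} (h : D0 R) (h' : D0 S) : D0 (fun ρ => R ρ ∧ S ρ) := by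
  obtain ⟨φ, h1, h2⟩ := h
  obtain ⟨ψ, h3, h4⟩ := h'
  exact ⟨_, .and h1 h3, fun ρ => by simp [AFml.Sat, h2, h4]⟩

theorem D0.or {R S : (ℕ → ℕ) → Prop} (h : D0 R) (h' : D0 S) : D0 (fun ρ => R ρ ∨ S ρ) := by
  obtain ⟨φ, h1, h2⟩ := h
  obtain ⟨ψ, h3, h4⟩ := h'
  exact ⟨_, .or h1 h3, fun ρ => by simp [AFml.Sat, h2, h4]⟩

theorem D0.bex (t : ATerm) {R : (ℕ → ℕ) → Prop} (h : D0 R) :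
    D0 (fun ρ => ∃ a ≤ t.val ρ, R (consEnv a ρ)) := by
  obtain ⟨φ, h1, h2⟩ := h
  exact ⟨_, .bex t h1, fun ρ => by simp [AFml.Sat, h2, val_lift, ATerm.val, consEnv]⟩

theorem D0.ball (t : ATerm) {R : (ℕ → ℕ) → Prop} (h : D0 R) :
    D0 (fun ρ => ∀ a ≤ t.val ρ, R (consEnv a ρ)) := by
  obtain ⟨φ, h1, h2⟩ := h
  exact ⟨_, .ball t h1, fun ρ => by simp [AFml.Sat, h2, val_lift, ATerm.val, consEnv]⟩

theorem D0.sub {R : (ℕ → ℕ) → Prop} (h : D0 R) (σ : ℕ → ATerm) :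
    D0 (fun ρ => R (fun n => (σ n).val ρ)) := by
  obtain ⟨φ, h1, h2⟩ := h
  exact ⟨_, delta0_sub h1 σ, fun ρ => by rw [sat_sub, h2]⟩

/-- `Δ₀`-definable ternary relations. -/
def D3 (R : ℕ → ℕ → ℕ → Prop) : Prop := D0 (fun ρ => R (ρ 0) (ρ 1) (ρ 2))

theorem D3.sub {R : ℕ → ℕ → ℕ → Prop} (h : D3 R) (t0 t1 t2 : ATerm) :
    D0 (fun ρ => R (t0.val ρ) (t1.val ρ) (t2.val ρ)) :=
  D0.sub h (fun n => if n = 0 then t0 else if n = 1 then t1 else t2)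

/-- Functions whose graph is `Σ₁`, in the form `∃ w, R w y x`. -/
def SF (g : ℕ → ℕ) : Prop :=
  ∃ R : ℕ → ℕ → ℕ → Prop, D3 R ∧ ∀ x y, (∃ w, R w y x) ↔ y = g x

theorem SF.const (c : ℕ) : SF (fun _ => c) :=
  ⟨fun _ y _ => y = c, (D0.eq (.var 1) (numeral c)).congr (by simp [ATerm.val]), by simp⟩

theorem SF.id : SF (fun x => x) :=
  ⟨fun _ y x => y = x, (D0.eq (.var 1) (.var 2)).congr (by simp [ATerm.val]), by simp⟩

theorem d3_pair : D3 (fun y a b => y = Nat.pair a b) := by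
  refine (D0.or (D0.and (D0.le (.succ (.var 1)) (.var 2))
      (D0.eq (.var 0) (.add (.mul (.var 2) (.var 2)) (.var 1))))
    (D0.and (D0.le (.var 2) (.var 1))
      (D0.eq (.var 0) (.add (.add (.mul (.var 1) (.var 1)) (.var 1)) (.var 2))))).congr ?_
  intro ρ
  simp only [ATerm.val, Nat.pair]
  split_ifs <;> constructor <;> intro h <;> omega

theorem SF.pair {g h : ℕ → ℕ} (hg : SF g) (hh : SF h) : SF (fun x => Nat.pair (g x) (h x)) := by
  obtain ⟨R, hR, hR'⟩ := hg
  obtain ⟨S, hS, hS'⟩ := hh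
  refine ⟨fun w y x => ∃ u ≤ w, ∃ v ≤ w, ∃ w1 ≤ w, ∃ w2 ≤ w,
    y = Nat.pair u v ∧ R w1 u x ∧ S w2 v x, ?_, ?_⟩
  · -- variables: w2, w1, v, u, w, y, x
    refine (D0.bex (.var 0) (D0.bex (.var 1) (D0.bex (.var 2) (D0.bex (.var 3)
      (D0.and (d3_pair.sub (.var 5) (.var 3) (.var 2))
        (D0.and (hR.sub (.var 1) (.var 3) (.var 6)) (hS.sub (.var 0) (.var 2) (.var 6)))))))).congr ?_
    intro ρ
    simp [ATerm.val, consEnv]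
  · intro x y
    constructor
    · rintro ⟨w, u, -, v, -, w1, -, w2, -, rfl, h1, h2⟩
      rw [(hR' x u).1 ⟨_, h1⟩, (hS' x v).1 ⟨_, h2⟩]
    · rintro rfl
      obtain ⟨w1, h1⟩ := (hR' x (g x)).2 rfl
      obtain ⟨w2, h2⟩ := (hS' x (h x)).2 rfl
      exact ⟨g x + h x + w1 + w2, g x, by omega, h x, by omega, w1, by omega, w2, by omega,
        rfl, h1, h2⟩

theorem SF.comp {g h : ℕ → ℕ} (hg : SF g) (hh : SF h) : SF (fun x => g (h x)) := by
  obtain ⟨R, hR, hR'⟩ := hg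
  obtain ⟨S, hS, hS'⟩ := hh
  refine ⟨fun w y x => ∃ u ≤ w, ∃ w1 ≤ w, ∃ w2 ≤ w, R w1 y u ∧ S w2 u x, ?_, ?_⟩
  · -- variables: w2, w1, u, w, y, x
    refine (D0.bex (.var 0) (D0.bex (.var 1) (D0.bex (.var 2)
        (D0.and (hR.sub (.var 1) (.var 4) (.var 2)) (hS.sub (.var 0) (.var 2) (.var 5)))))).congr ?_
    intro ρ
    simp [ATerm.val, consEnv]
  · intro x y
    constructor
    · rintro ⟨w, u, -, w1, -, w2, -, h1, h2⟩
      rw [(hR' u y).1 ⟨_, h1⟩, (hS' x u).1 ⟨_, h2⟩]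
    · rintro rfl
      obtain ⟨w1, h1⟩ := (hR' (h x) _).2 rfl
      obtain ⟨w2, h2⟩ := (hS' x (h x)).2 rfl
      exact ⟨h x + w1 + w2, h x, by omega, w1, by omega, w2, by omega, h1, h2⟩

/-- Code of the `k`-th numeral. -/
def nc (k : ℕ) : ℕ := (numeral k).code

theorem nc_zero : nc 0 = 2 := by simp [nc, numeral, ATerm.code, Nat.pair]

theorem nc_succ (k : ℕ) : nc (k + 1) = Nat.pair 2 (nc k) := rfl

/-- The relation `β(a,b,i) = u` is `Δ₀`. -/
def bet (a b i u : ℕ) : Prop := u ≤ (i + 1) * b ∧ ∃ q ≤ a, a = q * ((i + 1) * b + 1) + u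

theorem bet_iff (a b i u : ℕ) : bet a b i u ↔ u = a % ((i + 1) * b + 1) := by
  constructor
  · rintro ⟨h, q, -, h2⟩
    rw [h2, mul_comm, Nat.mul_add_mod, Nat.mod_eq_of_lt (by omega)]
  · rintro rfl
    refine ⟨Nat.lt_succ_iff.1 (Nat.mod_lt _ (by omega)), a / ((i + 1) * b + 1),
      Nat.div_le_self _ _, ?_⟩
    rw [mul_comm]
    exact (Nat.div_add_mod _ _).symm

theorem d0_bet (a b i u : ATerm) :
    D0 (fun ρ => bet (a.val ρ) (b.val ρ) (i.val ρ) (u.val ρ)) := by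
  refine (D0.and (D0.le u (.mul (.succ i) b)) (D0.bex a
    (D0.eq (a.lift 0) (.add (.mul (.var 0) (.succ (.mul (.succ (i.lift 0)) (b.lift 0))))
      (u.lift 0))))).congr ?_
  intro ρ
  simp [ATerm.val, val_lift, bet, consEnv]

theorem sf_nc : SF nc := by
  refine ⟨fun w y x => ∃ a ≤ w, ∃ b ≤ w, bet a b 0 2 ∧ bet a b x y ∧
    ∀ i ≤ x, i = x ∨ ∃ u ≤ w, ∃ v ≤ w, v = Nat.pair 2 u ∧ bet a b i u ∧ bet a b (i + 1) v, ?_, ?_⟩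
  · -- variables (b, a, w, y, x), then (v, u, i, b, a, w, y, x)
    refine (D0.bex (.var 0) (D0.bex (.var 1) (D0.and (d0_bet (.var 1) (.var 0) .zero (numeral 2))
      (D0.and (d0_bet (.var 1) (.var 0) (.var 4) (.var 3))
        (D0.ball (.var 4) (D0.or (D0.eq (.var 0) (.var 5))
          (D0.bex (.var 3) (D0.bex (.var 4) (D0.and (d3_pair.sub (.var 0) (numeral 2) (.var 1))
            (D0.and (d0_bet (.var 4) (.var 3) (.var 2) (.var 1))
              (d0_bet (.var 4) (.var 3) (.succ (.var 2)) (.var 0)))))))))))).congr ?_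
    intro ρ
    simp [ATerm.val, consEnv]
  · intro x y
    constructor
    · rintro ⟨w, a, -, b, -, h0, hx, hs⟩
      have key : ∀ i ≤ x, bet a b i (nc i) := by
        intro i
        induction i with
        | zero => intro _; rw [nc_zero]; exact h0
        | succ i ih =>
          intro hi
          rcases hs i (by omega) with h | ⟨u, -, v, -, rfl, h1, h2⟩
          · omega
          · have h3 := ih (by omega)
            rw [bet_iff] at h1 h3
            rw [nc_succ, h3, ← h1]
            exact h2
      have := key x le_rfl
      rw [bet_iff] at this hx
      rw [this, hx]
    · rintro rfl
      let l := (List.range (x + 1)).map nc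
      have hl : ∀ i ≤ x, bet (Nat.unbeta l).unpair.1 (Nat.unbeta l).unpair.2 i (nc i) := by
        intro i hi
        have := Nat.beta_unbeta_coe l ⟨i, by simp [l]; omega⟩
        rw [bet_iff]
        simp only [Nat.beta] at this
        rw [this]
        simp [l]
      obtain ⟨B, hB⟩ : ∃ B, ∀ i ≤ x, nc i ≤ B :=
        ⟨∑ i ∈ Finset.range (x + 1), nc i, fun i hi =>
          Finset.single_le_sum (f := nc) (fun _ _ => Nat.zero_le _) (by simp; omega)⟩
      refine ⟨(Nat.unbeta l).unpair.1 + (Nat.unbeta l).unpair.2 + B, _, ?_, _, ?_,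
        ?_, hl x le_rfl, ?_⟩
      · omega
      · omega
      · rw [← nc_zero]; exact hl 0 (by omega)
      · intro i hi
        by_cases h : i = x
        · exact .inl h
        · refine .inr ⟨nc i, ?_, nc (i + 1), ?_, nc_succ i, hl i hi, hl (i + 1) (by omega)⟩
          · have := hB i hi; omega
          · have := hB (i + 1) (by omega); omega

/-- Substitution of the numeral `m` for the variable `j`. -/
def sb (j m : ℕ) : ℕ → ATerm := fun n => if n = j then numeral m else .var n

theorem liftSub_sb (j m : ℕ) : liftSub (sb j m) = sb (j + 1) m := by
  funext n
  cases n with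
  | zero => simp [liftSub, sb]
  | succ n =>
    simp only [liftSub, sb]
    split_ifs <;> simp_all [ATerm.lift]

theorem sf_tcode {g : ℕ → ℕ} (hg : SF g) (j : ℕ) (t : ATerm) :
    SF (fun x => (t.substAll (sb j (g x))).code) := by
  induction t with
  | var n =>
    by_cases h : n = j
    · simpa [ATerm.substAll, sb, h, nc] using sf_nc.comp hg
    · simpa [ATerm.substAll, sb, h] using SF.const _
  | zero => exact SF.const _
  | succ t ih => exact (SF.const 2).pair ih
  | add t s h1 h2 => exact (SF.const 3).pair (h1.pair h2)
  | mul t s h1 h2 => exact (SF.const 4).pair (h1.pair h2)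

theorem sf_code {g : ℕ → ℕ} (hg : SF g) (φ : AFml) : ∀ j : ℕ,
    SF (fun x => (φ.substAll (sb j (g x))).code) := by
  induction φ with
  | eq t s => intro j; exact (SF.const 0).pair ((sf_tcode hg j t).pair (sf_tcode hg j s))
  | le t s => intro j; exact (SF.const 1).pair ((sf_tcode hg j t).pair (sf_tcode hg j s))
  | neg φ ih => intro j; exact (SF.const 2).pair (ih j)
  | and φ ψ h1 h2 => intro j; exact (SF.const 3).pair ((h1 j).pair (h2 j))
  | or φ ψ h1 h2 => intro j; exact (SF.const 4).pair ((h1 j).pair (h2 j))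
  | imp φ ψ h1 h2 => intro j; exact (SF.const 5).pair ((h1 j).pair (h2 j))
  | all φ ih =>
    intro j
    simp only [AFml.substAll, AFml.code, liftSub_sb]
    exact (SF.const 6).pair (ih (j + 1))
  | ex φ ih =>
    intro j
    simp only [AFml.substAll, AFml.code, liftSub_sb]
    exact (SF.const 7).pair (ih (j + 1))

/-! ### Derived rules of the proof system -/

theorem Proves.mono {Γ Δ : Set AFml} (h : Γ ⊆ Δ) {φ : AFml} (hp : Proves Γ φ) : Proves Δ φ := by
  induction hp with
  | ax h' => exact .ax (h h')
  | taut h' => exact .taut h'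
  | mp _ _ h1 h2 => exact .mp h1 h2
  | allE φ t => exact .allE φ t
  | exI φ t => exact .exI φ t
  | allImp φ ψ => exact .allImp φ ψ
  | vacAll φ => exact .vacAll φ
  | exDef φ => exact .exDef φ
  | gen _ ih => exact .gen ih
  | eqRefl t => exact .eqRefl t
  | eqSubst φ t s => exact .eqSubst φ t s

section rules
variable {Γ : Set AFml}

theorem t1 {A B : AFml} (h : ∀ v, A.evalProp v → B.evalProp v) (hA : Proves Γ A) : Proves Γ B :=
  .mp (.taut h) hA

theorem t2 {A B C : AFml} (h : ∀ v, A.evalProp v → B.evalProp v → C.evalProp v)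
    (hA : Proves Γ A) (hB : Proves Γ B) : Proves Γ C :=
  .mp (.mp (.taut (φ := .imp A (.imp B C)) h) hA) hB

theorem t3 {A B C D : AFml}
    (h : ∀ v, A.evalProp v → B.evalProp v → C.evalProp v → D.evalProp v)
    (hA : Proves Γ A) (hB : Proves Γ B) (hC : Proves Γ C) : Proves Γ D :=
  .mp (.mp (.mp (.taut (φ := .imp A (.imp B (.imp C D))) h) hA) hB) hC

theorem t4 {A B C D E : AFml}
    (h : ∀ v, A.evalProp v → B.evalProp v → C.evalProp v → D.evalProp v → E.evalProp v)
    (hA : Proves Γ A) (hB : Proves Γ B) (hC : Proves Γ C) (hD : Proves Γ D) : Proves Γ E :=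
  .mp (.mp (.mp (.mp (.taut (φ := .imp A (.imp B (.imp C (.imp D E)))) h) hA) hB) hC) hD

/-- Propositional reasoning under a universal quantifier. -/
theorem a1 {A B : AFml} (h : ∀ v, A.evalProp v → B.evalProp v) (hA : Proves Γ (.all A)) :
    Proves Γ (.all B) :=
  .mp (.mp (.allImp A B) (.gen (.taut h))) hA

theorem a2 {A B C : AFml} (h : ∀ v, A.evalProp v → B.evalProp v → C.evalProp v)
    (hA : Proves Γ (.all A)) (hB : Proves Γ (.all B)) : Proves Γ (.all C) :=
  .mp (.mp (.allImp B C) (a1 (B := .imp B C) h hA)) hB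

theorem exE {A B : AFml} (h : Proves Γ (.all (.imp A (B.lift 0)))) :
    Proves Γ (.imp (.ex A) B) := by
  have h1 : Proves Γ (.all (.imp ((AFml.neg B).lift 0) (.neg A))) :=
    a1 (by intro v; simp only [AFml.evalProp, AFml.lift]; tauto) h
  have h2 := Proves.mp (.allImp _ _) h1
  have h3 := Proves.vacAll (Γ := Γ) (.neg B)
  exact t3 (by intro v; simp only [AFml.evalProp, iffF]; tauto) h2 h3 (.exDef A)

theorem strip {A : AFml} (hf : A.FreeLt 1) (h : Proves Γ (.all A)) : Proves Γ A := by
  have h1 := Proves.mp (.allE A (.var 0)) h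
  have h2 : A.subst0 (.var 0) = A := by
    conv_rhs => rw [← sub_id A]
    refine sub_congr A (c := 1) ?_ hf
    intro n hn
    obtain rfl : n = 0 := by omega
    rfl
  rwa [h2] at h1

theorem eq_symm_i (t s : ATerm) : Proves Γ (.imp (.eq t s) (.eq s t)) := by
  have h := Proves.eqSubst (Γ := Γ) (.eq (.var 0) (t.lift 0)) t s
  simp only [AFml.subst0, AFml.substAll, ATerm.substAll, subst0Env, tlift_sub0] at h
  exact t2 (by intro v; simp only [AFml.evalProp]; tauto) h (.eqRefl t)

theorem eq_trans_i (t s r : ATerm) :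
    Proves Γ (.imp (.eq t s) (.imp (.eq s r) (.eq t r))) := by
  have h := Proves.eqSubst (Γ := Γ) (.eq (t.lift 0) (.var 0)) s r
  simp only [AFml.subst0, AFml.substAll, ATerm.substAll, subst0Env, tlift_sub0] at h
  exact t1 (by intro v; simp only [AFml.evalProp]; tauto) h

theorem eq_symm {t s : ATerm} (h : Proves Γ (.eq t s)) : Proves Γ (.eq s t) :=
  .mp (eq_symm_i t s) h

theorem eq_trans {t s r : ATerm} (h : Proves Γ (.eq t s)) (h' : Proves Γ (.eq s r)) :
    Proves Γ (.eq t r) :=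
  .mp (.mp (eq_trans_i t s r) h) h'

theorem eq_succ_i (t s : ATerm) : Proves Γ (.imp (.eq t s) (.eq (.succ t) (.succ s))) := by
  have h := Proves.eqSubst (Γ := Γ) (.eq (.succ (t.lift 0)) (.succ (.var 0))) t s
  simp only [AFml.subst0, AFml.substAll, ATerm.substAll, subst0Env, tlift_sub0] at h
  exact t2 (by intro v; simp only [AFml.evalProp]; tauto) h (.eqRefl (.succ t))

theorem eq_add {t s t' s' : ATerm} (h : Proves Γ (.eq t t')) (h' : Proves Γ (.eq s s')) :
    Proves Γ (.eq (.add t s) (.add t' s')) := by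
  have h1 := Proves.eqSubst (Γ := Γ) (.eq (.add (t.lift 0) (s.lift 0)) (.add (.var 0) (s.lift 0))) t t'
  have h2 := Proves.eqSubst (Γ := Γ) (.eq (.add (t'.lift 0) (s.lift 0)) (.add (t'.lift 0) (.var 0))) s s'
  simp only [AFml.subst0, AFml.substAll, ATerm.substAll, subst0Env, tlift_sub0] at h1 h2
  exact eq_trans (.mp (.mp h1 h) (.eqRefl _)) (.mp (.mp h2 h') (.eqRefl _))

theorem eq_mul {t s t' s' : ATerm} (h : Proves Γ (.eq t t')) (h' : Proves Γ (.eq s s')) :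
    Proves Γ (.eq (.mul t s) (.mul t' s')) := by
  have h1 := Proves.eqSubst (Γ := Γ) (.eq (.mul (t.lift 0) (s.lift 0)) (.mul (.var 0) (s.lift 0))) t t'
  have h2 := Proves.eqSubst (Γ := Γ) (.eq (.mul (t'.lift 0) (s.lift 0)) (.mul (t'.lift 0) (.var 0))) s s'
  simp only [AFml.subst0, AFml.substAll, ATerm.substAll, subst0Env, tlift_sub0] at h1 h2
  exact eq_trans (.mp (.mp h1 h) (.eqRefl _)) (.mp (.mp h2 h') (.eqRefl _))

theorem le_congr_i (r : ATerm) {t s : ATerm} (h : Proves Γ (.eq t s)) :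
    Proves Γ (.imp (.le r t) (.le r s)) := by
  have h1 := Proves.eqSubst (Γ := Γ) (.le (r.lift 0) (.var 0)) t s
  simp only [AFml.subst0, AFml.substAll, ATerm.substAll, subst0Env, tlift_sub0] at h1
  exact .mp h1 h

theorem le_congr_l (r : ATerm) {t s : ATerm} (h : Proves Γ (.eq t s)) :
    Proves Γ (.imp (.le t r) (.le s r)) := by
  have h1 := Proves.eqSubst (Γ := Γ) (.le (.var 0) (r.lift 0)) t s
  simp only [AFml.subst0, AFml.substAll, ATerm.substAll, subst0Env, tlift_sub0] at h1
  exact .mp h1 h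

end rules

/-! ### Basic arithmetic in `PA` -/

theorem pa_succNeZero (t : ATerm) : Proves PA (.neg (.eq (.succ t) .zero)) := by
  have h := Proves.mp (.allE _ t) (Proves.ax (Γ := PA) PAax.succNeZero)
  simpa only [AFml.subst0, AFml.substAll, ATerm.substAll, subst0Env] using h

theorem pa_succInj (t s : ATerm) :
    Proves PA (.imp (.eq (.succ t) (.succ s)) (.eq t s)) := by
  have h := Proves.mp (.allE _ t) (Proves.ax (Γ := PA) PAax.succInj)
  simp only [AFml.subst0, AFml.substAll, ATerm.substAll, subst0Env, liftSub] at h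
  have h := Proves.mp (.allE _ s) h
  simpa only [AFml.subst0, AFml.substAll, ATerm.substAll, subst0Env, tlift_sub0] using h

theorem pa_addZero (t : ATerm) : Proves PA (.eq (.add t .zero) t) := by
  have h := Proves.mp (.allE _ t) (Proves.ax (Γ := PA) PAax.addZero)
  simpa only [AFml.subst0, AFml.substAll, ATerm.substAll, subst0Env] using h

theorem pa_addSucc (t s : ATerm) :
    Proves PA (.eq (.add t (.succ s)) (.succ (.add t s))) := by
  have h := Proves.mp (.allE _ t) (Proves.ax (Γ := PA) PAax.addSucc)
  simp only [AFml.subst0, AFml.substAll, ATerm.substAll, subst0Env, liftSub] at h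
  have h := Proves.mp (.allE _ s) h
  simpa only [AFml.subst0, AFml.substAll, ATerm.substAll, subst0Env, tlift_sub0] using h

theorem pa_mulZero (t : ATerm) : Proves PA (.eq (.mul t .zero) .zero) := by
  have h := Proves.mp (.allE _ t) (Proves.ax (Γ := PA) PAax.mulZero)
  simpa only [AFml.subst0, AFml.substAll, ATerm.substAll, subst0Env] using h

theorem pa_mulSucc (t s : ATerm) :
    Proves PA (.eq (.mul t (.succ s)) (.add (.mul t s) t)) := by
  have h := Proves.mp (.allE _ t) (Proves.ax (Γ := PA) PAax.mulSucc)
  simp only [AFml.subst0, AFml.substAll, ATerm.substAll, subst0Env, liftSub] at h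
  have h := Proves.mp (.allE _ s) h
  simpa only [AFml.subst0, AFml.substAll, ATerm.substAll, subst0Env, tlift_sub0] using h

theorem pa_leDef (t s : ATerm) :
    Proves PA (iffF (.le t s) (.ex (.eq (.add (.var 0) (t.lift 0)) (s.lift 0)))) := by
  have h := Proves.mp (.allE _ t) (Proves.ax (Γ := PA) PAax.leDef)
  simp only [AFml.subst0, iffF, AFml.substAll, ATerm.substAll, subst0Env, liftSub] at h
  have h := Proves.mp (.allE _ s) h
  simpa only [AFml.subst0, iffF, AFml.substAll, ATerm.substAll, subst0Env, liftSub, tlift_sub0,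
    tlift_sub] using h

theorem le_intro (r t s : ATerm) : Proves PA (.imp (.eq (.add r t) s) (.le t s)) := by
  have h := Proves.exI (Γ := PA) (.eq (.add (.var 0) (t.lift 0)) (s.lift 0)) r
  simp only [AFml.subst0, AFml.substAll, ATerm.substAll, subst0Env, tlift_sub0] at h
  exact t2 (by intro v; simp only [AFml.evalProp, iffF]; tauto) h (pa_leDef t s)

theorem le_elim {t s : ATerm} {B : AFml}
    (h : Proves PA (.imp (.eq (.add (.var 0) (t.lift 0)) (s.lift 0)) (B.lift 0))) :
    Proves PA (.imp (.le t s) B) :=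
  t2 (by intro v; simp only [AFml.evalProp, iffF]; tauto) (exE (.gen h)) (pa_leDef t s)

theorem pa_zero_le (t : ATerm) : Proves PA (.le .zero t) :=
  .mp (le_intro t .zero t) (pa_addZero t)

theorem pa_le_of_succ (t s : ATerm) :
    Proves PA (.imp (.le (.succ t) (.succ s)) (.le t s)) := by
  apply le_elim
  simp only [AFml.lift, ATerm.lift]
  generalize t.lift 0 = t
  generalize s.lift 0 = s
  exact t4 (by intro v; simp only [AFml.evalProp]; tauto)
    (.mp (eq_trans_i (.succ (.add (.var 0) t)) _ (.succ s)) (eq_symm (pa_addSucc (.var 0) t)))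
    (pa_succInj (.add (.var 0) t) s) (le_intro (.var 0) t s) (.eqRefl .zero)

theorem pa_succ_le (t s : ATerm) :
    Proves PA (.imp (.le t s) (.le (.succ t) (.succ s))) := by
  apply le_elim
  simp only [AFml.lift, ATerm.lift]
  generalize t.lift 0 = t
  generalize s.lift 0 = s
  exact t3 (by intro v; simp only [AFml.evalProp]; tauto)
    (.mp (eq_trans_i _ _ (.succ s)) (pa_addSucc (.var 0) t))
    (eq_succ_i (.add (.var 0) t) s) (le_intro (.var 0) (.succ t) (.succ s))

theorem pa_not_succ_le (t : ATerm) : Proves PA (.neg (.le (.succ t) .zero)) := by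
  have h : Proves PA (.imp (.le (.succ t) .zero) (.neg (.eq .zero .zero))) := by
    apply le_elim
    simp only [AFml.lift, ATerm.lift]
    generalize t.lift 0 = t
    exact t2 (by intro v; simp only [AFml.evalProp]; tauto)
      (.mp (eq_trans_i (.succ (.add (.var 0) t)) _ .zero) (eq_symm (pa_addSucc (.var 0) t)))
      (pa_succNeZero (.add (.var 0) t))
  exact t2 (by intro v; simp only [AFml.evalProp]; tauto) h (.eqRefl .zero)

/-- Case distinction: zero or successor. -/
theorem pa_cases {θ : AFml} (h0 : Proves PA (θ.subst0 .zero))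
    (h1 : Proves PA (.all (succSubst θ))) : Proves PA (.all θ) := by
  have h2 : Proves PA (.all (.imp θ (succSubst θ))) :=
    a1 (by intro v; simp only [AFml.evalProp]; tauto) h1
  exact .mp (.ax (PAax.ind θ)) (t2 (by intro v; simp only [AFml.evalProp]; tauto) h0 h2)

theorem succSubst_sub0 (ψ : AFml) (a : ℕ) :
    (succSubst ψ).subst0 (numeral a) = ψ.subst0 (numeral (a + 1)) := by
  rw [succSubst, AFml.subst0, AFml.subst0, sub_sub]
  congr 1
  funext n
  cases n <;> simp [ATerm.substAll, subst0Env, numeral]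

theorem pa_bdd (n : ℕ) : ∀ ψ : AFml, (∀ a ≤ n, Proves PA (ψ.subst0 (numeral a))) →
    Proves PA (.all (.imp (.le (.var 0) (numeral n)) ψ)) := by
  induction n with
  | zero =>
    intro ψ h
    apply pa_cases
    · simp only [AFml.subst0, AFml.substAll]
      exact t1 (by intro v; simp only [AFml.evalProp]; tauto) (h 0 le_rfl)
    · simp only [succSubst, AFml.substAll, ATerm.substAll, numeral]
      exact .gen (t1 (by intro v; simp only [AFml.evalProp]; tauto) (pa_not_succ_le (.var 0)))
  | succ n ih =>
    intro ψ h
    apply pa_cases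
    · simp only [AFml.subst0, AFml.substAll]
      exact t1 (by intro v; simp only [AFml.evalProp]; tauto) (h 0 (by omega))
    · have h1 := ih (succSubst ψ) (fun a ha => by
        rw [succSubst_sub0]; exact h _ (by omega))
      refine a2 ?_ h1 (.gen (pa_le_of_succ (.var 0) (numeral n)))
      intro v
      simp only [succSubst, AFml.substAll, ATerm.substAll, numeral, num_sub, AFml.evalProp]
      tauto

theorem pa_total (m : ℕ) :
    Proves PA (.all (.or (.le (.var 0) (numeral m)) (.le (numeral m) (.var 0)))) := by
  induction m with
  | zero =>
    exact .gen (t1 (by intro v; simp only [AFml.evalProp]; tauto) (pa_zero_le (.var 0)))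
  | succ m ih =>
    apply pa_cases
    · simp only [AFml.subst0, AFml.substAll, ATerm.substAll, subst0Env, num_sub]
      exact t1 (by intro v; simp only [AFml.evalProp]; tauto) (pa_zero_le (numeral (m + 1)))
    · simp only [succSubst, AFml.substAll, ATerm.substAll, num_sub, numeral]
      refine .gen (t3 ?_ (strip ?_ ih) (pa_succ_le (.var 0) (numeral m))
        (pa_succ_le (numeral m) (.var 0)))
      · intro v; simp only [AFml.evalProp]; simp; tauto
      · simp [AFml.FreeLt, ATerm.FreeLt, num_free]

theorem pa_le_mono (n : ℕ) : ∀ m ≤ n,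
    Proves PA (.all (.imp (.le (numeral n) (.var 0)) (.le (numeral m) (.var 0)))) := by
  induction n with
  | zero =>
    intro m hm
    obtain rfl : m = 0 := by omega
    exact .gen (.taut (by intro v; simp [AFml.evalProp]))
  | succ n ih =>
    intro m hm
    cases m with
    | zero =>
      exact .gen (t1 (by intro v; simp only [AFml.evalProp]; tauto) (pa_zero_le (.var 0)))
    | succ m =>
      apply pa_cases
      · simp only [AFml.subst0, AFml.substAll, ATerm.substAll, subst0Env, numeral, num_sub]
        exact t1 (by intro v; simp only [AFml.evalProp]; tauto) (pa_not_succ_le (numeral n))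
      · simp only [succSubst, AFml.substAll, ATerm.substAll, num_sub, numeral]
        refine .gen (t3 ?_ (strip ?_ (ih m (by omega))) (pa_le_of_succ (numeral n) (.var 0))
          (pa_succ_le (numeral m) (.var 0)))
        · intro v; simp only [AFml.evalProp]; simp; tauto
        · simp [AFml.FreeLt, ATerm.FreeLt, num_free]

/-! ### `Δ₀`-completeness -/

theorem num_add (m n : ℕ) :
    Proves PA (.eq (.add (numeral m) (numeral n)) (numeral (m + n))) := by
  induction n with
  | zero => exact pa_addZero _
  | succ n ih => exact eq_trans (pa_addSucc _ _) (.mp (eq_succ_i _ _) ih)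

theorem num_mul (m n : ℕ) :
    Proves PA (.eq (.mul (numeral m) (numeral n)) (numeral (m * n))) := by
  induction n with
  | zero => exact pa_mulZero _
  | succ n ih =>
    exact eq_trans (pa_mulSucc _ _) (eq_trans (eq_add ih (.eqRefl _)) (num_add _ _))

theorem num_ne : ∀ m n : ℕ, m ≠ n → Proves PA (.neg (.eq (numeral m) (numeral n)))
  | 0, 0, h => absurd rfl h
  | m + 1, 0, _ => pa_succNeZero _
  | 0, n + 1, _ =>
    t2 (by intro v; simp only [AFml.evalProp]; tauto) (pa_succNeZero (numeral n))
      (eq_symm_i (numeral 0) (numeral (n + 1)))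
  | m + 1, n + 1, h =>
    t2 (by intro v; simp only [AFml.evalProp, numeral]; tauto) (num_ne m n (by omega))
      (pa_succInj (numeral m) (numeral n))

theorem num_le : ∀ m n : ℕ, m ≤ n → Proves PA (.le (numeral m) (numeral n))
  | 0, _, _ => pa_zero_le _
  | m + 1, 0, h => by omega
  | m + 1, n + 1, h => .mp (pa_succ_le _ _) (num_le m n (by omega))

theorem num_not_le : ∀ m n : ℕ, ¬ m ≤ n → Proves PA (.neg (.le (numeral m) (numeral n)))
  | 0, _, h => by omega
  | m + 1, 0, _ => pa_not_succ_le _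
  | m + 1, n + 1, h =>
    t2 (by intro v; simp only [AFml.evalProp, numeral]; tauto) (num_not_le m n (by omega))
      (pa_le_of_succ (numeral m) (numeral n))

/-- The numeral environment. -/
def ne (ρ : ℕ → ℕ) : ℕ → ATerm := fun n => numeral (ρ n)

theorem term_val (t : ATerm) (ρ : ℕ → ℕ) :
    Proves PA (.eq (t.substAll (ne ρ)) (numeral (t.val ρ))) := by
  induction t with
  | var n => exact .eqRefl _
  | zero => exact .eqRefl _
  | succ t ih => exact .mp (eq_succ_i _ _) ih
  | add t s h1 h2 => exact eq_trans (eq_add h1 h2) (num_add _ _)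
  | mul t s h1 h2 => exact eq_trans (eq_mul h1 h2) (num_mul _ _)

theorem ne_lift (t : ATerm) (ρ : ℕ → ℕ) : (t.substAll (ne ρ)).lift 0 = t.substAll (ne ρ) := by
  rw [tlift_eq, tsub_sub]
  congr 1; funext n; simp [ne]

theorem ne_sub (t : ATerm) (ρ : ℕ → ℕ) (σ : ℕ → ATerm) :
    (t.substAll (ne ρ)).substAll σ = t.substAll (ne ρ) := by
  rw [tsub_sub]
  congr 1; funext n; simp [ne]

theorem ne_cons (φ : AFml) (ρ : ℕ → ℕ) (a : ℕ) :
    (φ.substAll (liftSub (ne ρ))).substAll (subst0Env (numeral a)) =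
      φ.substAll (ne (consEnv a ρ)) := by
  rw [sub_sub]
  congr 1
  funext n
  cases n <;> simp [liftSub, ne, consEnv, ATerm.substAll, subst0Env]

theorem delta0_dec {φ : AFml} (h : IsDelta0 φ) : ∀ ρ : ℕ → ℕ,
    (φ.Sat ρ → Proves PA (φ.substAll (ne ρ))) ∧
    (¬ φ.Sat ρ → Proves PA (.neg (φ.substAll (ne ρ)))) := by
  induction h with
  | eq t s =>
    intro ρ
    have ht := term_val t ρ
    have hs := term_val s ρ
    simp only [AFml.Sat, AFml.substAll]
    refine ⟨fun h => ?_, fun h => ?_⟩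
    · rw [h] at ht
      exact eq_trans ht (eq_symm hs)
    · refine t3 ?_ (num_ne _ _ h) (.mp (eq_trans_i _ _ (s.substAll (ne ρ))) (eq_symm ht))
        (t2 (C := .imp (.eq (numeral (t.val ρ)) (s.substAll (ne ρ)))
          (.eq (numeral (t.val ρ)) (numeral (s.val ρ)))) ?_
          (eq_trans_i (numeral (t.val ρ)) (s.substAll (ne ρ)) (numeral (s.val ρ))) hs)
      · intro v; simp only [AFml.evalProp]; tauto
      · intro v; simp only [AFml.evalProp]; tauto
  | le t s =>
    intro ρ
    have ht := term_val t ρ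
    have hs := term_val s ρ
    simp only [AFml.Sat, AFml.substAll]
    refine ⟨fun h => ?_, fun h => ?_⟩
    · exact .mp (le_congr_l _ (eq_symm ht)) (.mp (le_congr_i _ (eq_symm hs)) (num_le _ _ h))
    · exact t3 (by intro v; simp only [AFml.evalProp]; tauto) (num_not_le _ _ h)
        (le_congr_l (s.substAll (ne ρ)) ht) (le_congr_i (numeral (t.val ρ)) hs)
  | neg _ ih =>
    intro ρ
    obtain ⟨i1, i2⟩ := ih ρ
    simp only [AFml.Sat, AFml.substAll]
    refine ⟨fun h => i2 h, fun h => ?_⟩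
    exact t1 (by intro v; simp only [AFml.evalProp]; tauto) (i1 (not_not.1 h))
  | and _ _ ih ih' =>
    intro ρ
    obtain ⟨i1, i2⟩ := ih ρ
    obtain ⟨j1, j2⟩ := ih' ρ
    simp only [AFml.Sat, AFml.substAll]
    refine ⟨fun h => t2 (by intro v; simp only [AFml.evalProp]; tauto) (i1 h.1) (j1 h.2),
      fun h => ?_⟩
    rcases not_and_or.1 h with h | h
    · exact t1 (by intro v; simp only [AFml.evalProp]; tauto) (i2 h)
    · exact t1 (by intro v; simp only [AFml.evalProp]; tauto) (j2 h)
  | or _ _ ih ih' =>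
    intro ρ
    obtain ⟨i1, i2⟩ := ih ρ
    obtain ⟨j1, j2⟩ := ih' ρ
    simp only [AFml.Sat, AFml.substAll]
    refine ⟨fun h => ?_, fun h => ?_⟩
    · rcases h with h | h
      · exact t1 (by intro v; simp only [AFml.evalProp]; tauto) (i1 h)
      · exact t1 (by intro v; simp only [AFml.evalProp]; tauto) (j1 h)
    · rw [not_or] at h
      exact t2 (by intro v; simp only [AFml.evalProp]; tauto) (i2 h.1) (j2 h.2)
  | imp _ _ ih ih' =>
    intro ρ
    obtain ⟨i1, i2⟩ := ih ρ
    obtain ⟨j1, j2⟩ := ih' ρ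
    simp only [AFml.Sat, AFml.substAll]
    refine ⟨fun h => ?_, fun h => ?_⟩
    · rcases imp_iff_not_or.1 h with h | h
      · exact t1 (by intro v; simp only [AFml.evalProp]; tauto) (i2 h)
      · exact t1 (by intro v; simp only [AFml.evalProp]; tauto) (j1 h)
    · rw [Classical.not_imp] at h
      exact t2 (by intro v; simp only [AFml.evalProp]; tauto) (i1 h.1) (j2 h.2)
  | @ball φ t _ ih =>
    intro ρ
    have ht := term_val t ρ
    simp only [AFml.Sat, AFml.substAll, tlift_sub, val_lift, ne_lift, ATerm.substAll, liftSub]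
    refine ⟨fun h => ?_, fun h => ?_⟩
    · have h1 := pa_bdd (t.val ρ) (φ.substAll (liftSub (ne ρ))) (fun a ha => by
        rw [AFml.subst0, ne_cons]
        exact (ih (consEnv a ρ)).1 (h a ha))
      exact a2 (by intro v; simp only [AFml.evalProp]; tauto) h1 (.gen (le_congr_i (.var 0) ht))
    · push Not at h
      obtain ⟨a, ha, hs⟩ := h
      have h1 := (ih (consEnv a ρ)).2 hs
      have h2 := Proves.allE (Γ := PA) (.imp (.le (.var 0) (t.substAll (ne ρ)))
        (φ.substAll (liftSub (ne ρ)))) (numeral a)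
      simp only [AFml.subst0, AFml.substAll, ATerm.substAll, subst0Env, ne_cons, ne_sub] at h2
      have h3 : Proves PA (.le (numeral a) (t.substAll (ne ρ))) :=
        .mp (le_congr_i _ (eq_symm ht)) (num_le _ _ ha)
      exact t3 (by intro v; simp only [AFml.evalProp]; tauto) h1 h2 h3
  | @bex φ t _ ih =>
    intro ρ
    have ht := term_val t ρ
    simp only [AFml.Sat, AFml.substAll, tlift_sub, val_lift, ne_lift, ATerm.substAll, liftSub]
    refine ⟨fun h => ?_, fun h => ?_⟩
    · obtain ⟨a, ha, hs⟩ := h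
      have h1 := (ih (consEnv a ρ)).1 hs
      have h2 := Proves.exI (Γ := PA) (.and (.le (.var 0) (t.substAll (ne ρ)))
        (φ.substAll (liftSub (ne ρ)))) (numeral a)
      simp only [AFml.subst0, AFml.substAll, ATerm.substAll, subst0Env, ne_cons, ne_sub] at h2
      have h3 : Proves PA (.le (numeral a) (t.substAll (ne ρ))) :=
        .mp (le_congr_i _ (eq_symm ht)) (num_le _ _ ha)
      exact t3 (by intro v; simp only [AFml.evalProp]; tauto) h1 h2 h3
    · push Not at h
      have h1 := pa_bdd (t.val ρ) (.neg (φ.substAll (liftSub (ne ρ)))) (fun a ha => by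
        simp only [AFml.subst0, AFml.substAll, ne_cons]
        exact (ih (consEnv a ρ)).2 (h a ha))
      have h2 : Proves PA (.all (.neg (.and (.le (.var 0) (t.substAll (ne ρ)))
          (φ.substAll (liftSub (ne ρ)))))) :=
        a2 (by intro v; simp only [AFml.evalProp]; tauto) h1 (.gen (le_congr_i (.var 0) ht))
      exact t2 (by intro v; simp only [AFml.evalProp, iffF]; tauto) h2 (.exDef _)

/-! ### Representability and the fixed point -/

/-- The environment `t0, t1, t2, t2, t2, …`. -/
def e3 (t0 t1 t2 : ATerm) : ℕ → ATerm
  | 0 => t0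
  | 1 => t1
  | _ + 2 => t2

theorem e3_sub (R : AFml) (a b c : ATerm) (τ : ℕ → ATerm) :
    (R.substAll (e3 a b c)).substAll τ =
      R.substAll (e3 (a.substAll τ) (b.substAll τ) (c.substAll τ)) := by
  rw [sub_sub]
  congr 1
  funext n
  match n with
  | 0 => rfl
  | 1 => rfl
  | n + 2 => rfl

theorem e3_free (R : AFml) {a b c : ATerm} {k : ℕ} (ha : a.FreeLt k) (hb : b.FreeLt k)
    (hc : c.FreeLt k) : (R.substAll (e3 a b c)).FreeLt k := by
  apply free_trunc
  intro n
  match n with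
  | 0 => exact ha
  | 1 => exact hb
  | n + 2 => exact hc

/-- Rosser-style functional graph, with variables `z, y, x`. -/
def graphF (R : AFml) : AFml :=
  .and (.ex (.and (.le (.var 0) (.var 1)) (R.substAll (e3 (.var 0) (.var 2) (.var 3)))))
    (.and (.le (.var 1) (.var 0))
      (.all (.imp (.le (.var 0) (.var 1)) (.all (.imp (.le (.var 0) (.var 2))
        (.imp (R.substAll (e3 (.var 0) (.var 1) (.var 4))) (.eq (.var 1) (.var 3))))))))

theorem graphF_delta0 {R : AFml} (h : IsDelta0 R) : IsDelta0 (graphF R) := by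
  refine .and (.bex (.var 0) (delta0_sub h _)) (.and (.le _ _) ?_)
  exact .ball (.var 0) (.ball (.var 1) (.imp (delta0_sub h _) (.eq _ _)))

theorem graphF_free (R : AFml) : (graphF R).FreeLt 3 := by
  simp [graphF, AFml.FreeLt, ATerm.FreeLt]
  exact ⟨e3_free R (by simp [ATerm.FreeLt]) (by simp [ATerm.FreeLt]) (by simp [ATerm.FreeLt]), e3_free R (by simp [ATerm.FreeLt]) (by simp [ATerm.FreeLt]) (by simp [ATerm.FreeLt])⟩

/-- Instance of `graphF`. -/
def graphI (R : AFml) (z y : ATerm) (k : ℕ) : AFml := (graphF R).substAll (e3 z y (numeral k))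

theorem graphI_eq (R : AFml) (z y : ATerm) (k : ℕ) : graphI R z y k =
  .and (.ex (.and (.le (.var 0) (z.lift 0)) (R.substAll (e3 (.var 0) (y.lift 0) (numeral k)))))
    (.and (.le y z)
      (.all (.imp (.le (.var 0) (z.lift 0)) (.all (.imp (.le (.var 0) ((z.lift 0).lift 0))
        (.imp (R.substAll (e3 (.var 0) (.var 1) (numeral k)))
          (.eq (.var 1) ((y.lift 0).lift 0)))))))) := by
  simp [graphI, graphF, AFml.substAll, ATerm.substAll, liftSub, e3, e3_sub, ATerm.lift]

theorem rep {d : ℕ → ℕ} (hd : SF d) : ∃ M : AFml, M.FreeLt 3 ∧ ∀ k,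
    (∃ z : ℕ, Proves PA (M.substAll (e3 (numeral z) (numeral (d k)) (numeral k)))) ∧
    Proves PA (.all (.imp (M.substAll (e3 (.var 0) (.var 1) (numeral k)))
      (.eq (numeral (d k)) (.var 1)))) := by
  obtain ⟨S, ⟨R, hR0, hRS⟩, hS⟩ := hd
  refine ⟨graphF R, graphF_free R, fun k => ?_⟩
  have envR : ∀ a b c : ℕ, R.substAll (e3 (numeral a) (numeral b) (numeral c)) =
      R.substAll (ne (fun n => if n = 0 then a else if n = 1 then b else c)) := by
    intro a b c
    congr 1; funext n
    match n with
    | 0 => rfl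
    | 1 => rfl
    | n + 2 => simp [e3, ne]
  have envM : ∀ a b c : ℕ, (graphF R).substAll (e3 (numeral a) (numeral b) (numeral c)) =
      (graphF R).substAll (ne (fun n => if n = 0 then a else if n = 1 then b else c)) := by
    intro a b c
    congr 1; funext n
    match n with
    | 0 => rfl
    | 1 => rfl
    | n + 2 => simp [e3, ne]
  have satM : ∀ z y x : ℕ,
      (graphF R).Sat (fun n => if n = 0 then z else if n = 1 then y else x) ↔
      (∃ w ≤ z, S w y x) ∧ y ≤ z ∧ ∀ y' ≤ z, ∀ w ≤ z, S w y' x → y' = y := by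
    intro z y x
    simp [graphF, AFml.Sat, ATerm.val, consEnv, sat_sub, hRS, e3]
  obtain ⟨w0, hw0⟩ := (hS k (d k)).2 rfl
  constructor
  · refine ⟨w0 + d k, ?_⟩
    rw [envM]
    refine (delta0_dec (graphF_delta0 hR0) _).1 ((satM _ _ _).2 ⟨⟨w0, by omega, hw0⟩, by omega, ?_⟩)
    intro y' _ w _ h
    exact (hS k y').1 ⟨w, h⟩
  · change Proves PA (.all (.imp (graphI R (.var 0) (.var 1) k) (.eq (numeral (d k)) (.var 1))))
    -- small `z`
    have hsmall : Proves PA (.all (.imp (.le (.var 0) (numeral (w0 + d k)))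
        (.imp (graphI R (.var 0) (.var 1) k) (.eq (numeral (d k)) (.var 1))))) := by
      apply pa_bdd
      intro a _
      have h1 : AFml.subst0 (.imp (graphI R (.var 0) (.var 1) k) (.eq (numeral (d k)) (.var 1)))
          (numeral a) = .imp (graphI R (numeral a) (.var 0) k) (.eq (numeral (d k)) (.var 0)) := by
        simp [AFml.subst0, AFml.substAll, graphI, e3_sub, ATerm.substAll, subst0Env]
      rw [h1]
      have h2 : Proves PA (.all (.imp (.le (.var 0) (numeral a))
          (.imp (graphI R (numeral a) (.var 0) k) (.eq (numeral (d k)) (.var 0))))) := by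
        apply pa_bdd
        intro b _
        have h3 : AFml.subst0 (.imp (graphI R (numeral a) (.var 0) k)
            (.eq (numeral (d k)) (.var 0))) (numeral b) =
            .imp (graphI R (numeral a) (numeral b) k) (.eq (numeral (d k)) (numeral b)) := by
          simp [AFml.subst0, AFml.substAll, graphI, e3_sub, ATerm.substAll, subst0Env]
        rw [h3, graphI, envM]
        have hdec := delta0_dec (graphF_delta0 hR0)
          (fun n => if n = 0 then a else if n = 1 then b else k)
        by_cases hs : (graphF R).Sat (fun n => if n = 0 then a else if n = 1 then b else k)
        · obtain ⟨⟨w, _, hw⟩, -⟩ := (satM _ _ _).1 hs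
          rw [← (hS k b).1 ⟨w, hw⟩]
          exact t1 (by intro v; simp only [AFml.evalProp]; tauto)
            (Proves.eqRefl (Γ := PA) (numeral b))
        · exact t1 (by intro v; simp only [AFml.evalProp]; tauto) (hdec.2 hs)
      have h4 := strip (by
        simp [AFml.FreeLt, ATerm.FreeLt, num_free, graphI]
        exact e3_free _ (num_free _ _) (by simp [ATerm.FreeLt]) (num_free _ _)) h2
      rw [graphI_eq] at h4 ⊢
      exact t1 (by intro v; simp only [AFml.evalProp]; tauto) h4
    -- large `z`
    have hlarge : Proves PA (.imp (.le (numeral (w0 + d k)) (.var 0))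
        (.imp (graphI R (.var 0) (.var 1) k) (.eq (numeral (d k)) (.var 1)))) := by
      have hfr : ∀ m n : ℕ, AFml.FreeLt 1 (.imp (.le (numeral n) (.var 0))
          (.le (numeral m) (.var 0))) := by
        simp [AFml.FreeLt, ATerm.FreeLt, num_free]
      have l1 := strip (hfr _ _) (pa_le_mono (w0 + d k) w0 (by omega))
      have l2 := strip (hfr _ _) (pa_le_mono (w0 + d k) (d k) (by omega))
      have hr : Proves PA (R.substAll (e3 (numeral w0) (numeral (d k)) (numeral k))) := by
        rw [envR]
        exact (delta0_dec hR0 _).1 ((hRS _).2 (by simpa using hw0))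
      rw [graphI_eq]
      simp only [ATerm.lift]
      have i1 := Proves.allE (Γ := PA) (.imp (.le (.var 0) (.var 1))
        (.all (.imp (.le (.var 0) (.var 2))
        (.imp (R.substAll (e3 (.var 0) (.var 1) (numeral k)))
          (.eq (.var 1) (.var 3)))))) (numeral (d k))
      have i2 := Proves.allE (Γ := PA) (.imp (.le (.var 0) (.var 1))
        (.imp (R.substAll (e3 (.var 0) (numeral (d k)) (numeral k)))
          (.eq (numeral (d k)) (.var 2)))) (numeral w0)
      simp [AFml.subst0, AFml.substAll, e3_sub, ATerm.substAll, subst0Env, liftSub,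
        ATerm.lift] at i1 i2
      have l12 : Proves PA (.imp (.le (numeral (w0 + d k)) (.var 0))
          (.and (.le (numeral w0) (.var 0)) (.le (numeral (d k)) (.var 0)))) :=
        t2 (by intro v; simp only [AFml.evalProp]; tauto) l1 l2
      refine t4 ?_ l12 hr i1 i2
      intro v
      simp [AFml.evalProp]
      tauto
    have htot := strip (by simp [AFml.FreeLt, ATerm.FreeLt, num_free]) (pa_total (w0 + d k))
    have hl2 : Proves PA (.all (.imp (.neg (.le (.var 0) (numeral (w0 + d k))))
        (.imp (graphI R (.var 0) (.var 1) k) (.eq (numeral (d k)) (.var 1))))) :=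
      .gen (t2 (by intro v; simp only [AFml.evalProp]; tauto) htot hlarge)
    exact a2 (by intro v; simp only [AFml.evalProp]; tauto) hsmall hl2

/-- The diagonal function: code of `P^j(⌜∀x (x = k̄ → δ)⌝)` where `k = ⌜δ⌝`. -/
def diagC (P : AFml) : ℕ → ℕ → ℕ
  | 0, k => Nat.pair 6 (Nat.pair 5 (Nat.pair (Nat.pair 0 (Nat.pair (Nat.pair 0 0) (nc k))) k))
  | j + 1, k => (P.substAll (sb 0 (diagC P j k))).code

theorem sf_diagC (P : AFml) (j : ℕ) : SF (diagC P j) := by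
  induction j with
  | zero =>
    exact (SF.const 6).pair ((SF.const 5).pair (((SF.const 0).pair
      ((SF.const _).pair sf_nc)).pair SF.id))
  | succ j ih => exact sf_code ih P 0

theorem subst0_num {P : AFml} (hP : P.FreeLt 1) (m : ℕ) :
    P.subst0 (numeral m) = P.substAll (sb 0 m) := by
  refine sub_congr P (c := 1) ?_ hP
  intro n hn
  obtain rfl : n = 0 := by omega
  rfl

/-- The fixed point `φ ↔ ¬ P^(m+1)(⌜φ⌝)`. -/
theorem fixpoint (P : AFml) (hP : P.FreeLt 1) (m : ℕ) : ∃ φ : AFml, φ.FreeLt 0 ∧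
    Proves PA (iffF φ (.neg (iterPred P (m + 1) φ))) := by
  obtain ⟨M, hMf, hM⟩ := rep (sf_diagC P m)
  let δ : AFml := .all (.imp (.ex M) (.neg P))
  have hδ : δ.FreeLt 1 := by
    have hP2 : P.FreeLt 2 := by
      have := free_sub P (c := 1) (c' := 2) (σ := .var)
        (fun n hn => by simp [ATerm.FreeLt]; omega) hP
      rwa [sub_id] at this
    exact ⟨hMf, hP2⟩
  let k := δ.code
  let φ : AFml := .all (.imp (.eq (.var 0) (numeral k)) δ)
  have hcode : ∀ j, (iterPred P j φ).code = diagC P j k := by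
    intro j
    induction j with
    | zero => rfl
    | succ j ih =>
      rw [iterPred, AFml.appNum, gnum, subst0_num hP, ih, diagC]
  refine ⟨φ, ⟨by simp [AFml.FreeLt, ATerm.FreeLt, num_free], hδ⟩, ?_⟩
  have hiter : iterPred P (m + 1) φ = P.subst0 (numeral (diagC P m k)) := by
    rw [iterPred, AFml.appNum, gnum, hcode]
  rw [hiter]
  obtain ⟨⟨z, hz⟩, hu⟩ := hM k
  generalize diagC P m k = e at hz hu
  -- `φ ↔ δ(k̄)`
  have hsub : δ.subst0 (.var 0) = δ := by
    conv_rhs => rw [← sub_id δ]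
    refine sub_congr δ (c := 1) ?_ hδ
    intro n hn
    obtain rfl : n = 0 := by omega
    rfl
  have f1 : Proves PA (.imp φ (δ.subst0 (numeral k))) := by
    have h := Proves.allE (Γ := PA) (.imp (.eq (.var 0) (numeral k)) δ) (numeral k)
    have h' : AFml.subst0 (.imp (.eq (.var 0) (numeral k)) δ) (numeral k) =
      .imp (.eq (numeral k) (numeral k)) (δ.subst0 (numeral k)) := by
      simp [AFml.subst0, AFml.substAll, ATerm.substAll, subst0Env]
    rw [h'] at h
    exact t2 (by intro v; simp only [AFml.evalProp]; tauto) h (.eqRefl (numeral k))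
  have hcl : (δ.subst0 (numeral k)).FreeLt 0 := by
    refine free_sub δ (c := 1) ?_ hδ
    intro n hn
    obtain rfl : n = 0 := by omega
    exact num_free _ _
  have f2 : Proves PA (.imp (δ.subst0 (numeral k)) φ) := by
    have h := Proves.eqSubst (Γ := PA) δ (numeral k) (.var 0)
    rw [hsub] at h
    have h1 : Proves PA (.all (.imp (δ.subst0 (numeral k))
        (.imp (.eq (.var 0) (numeral k)) δ))) :=
      .gen (t2 (by intro v; simp only [AFml.evalProp]; tauto) h
        (eq_symm_i (.var 0) (numeral k)))
    have h2 := Proves.vacAll (Γ := PA) (δ.subst0 (numeral k))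
    rw [lift_closed hcl] at h2
    exact t2 (by intro v; simp only [AFml.evalProp]; tauto) (Proves.mp (.allImp _ _) h1) h2
  -- `δ(k̄) ↔ ¬ P(ē)`
  have hδk : δ.subst0 (numeral k) =
      .all (.imp (.ex (M.substAll (e3 (.var 0) (.var 1) (numeral k)))) (.neg P)) := by
    have e1 : M.substAll (liftSub (liftSub (subst0Env (numeral k)))) =
        M.substAll (e3 (.var 0) (.var 1) (numeral k)) := by
      refine sub_congr M (c := 3) ?_ hMf
      intro n hn
      interval_cases n <;> simp [liftSub, e3, subst0Env, ATerm.lift]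
    have e2 : P.substAll (liftSub (subst0Env (numeral k))) = P := by
      conv_rhs => rw [← sub_id P]
      refine sub_congr P (c := 1) ?_ hP
      intro n hn
      obtain rfl : n = 0 := by omega
      rfl
    simp only [δ, AFml.subst0, AFml.substAll, e1, e2]
  have g1 : Proves PA (.imp (δ.subst0 (numeral k)) (.neg (P.subst0 (numeral e)))) := by
    rw [hδk]
    have h := Proves.allE (Γ := PA) (.imp (.ex (M.substAll (e3 (.var 0) (.var 1) (numeral k))))
      (.neg P)) (numeral e)
    have h' : AFml.subst0 (.imp (.ex (M.substAll (e3 (.var 0) (.var 1) (numeral k))))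
      (.neg P)) (numeral e) = .imp (.ex (M.substAll (e3 (.var 0) (numeral e) (numeral k))))
      (.neg (P.subst0 (numeral e))) := by
      simp [AFml.subst0, AFml.substAll, ATerm.substAll, subst0Env, e3_sub, liftSub]
    rw [h'] at h
    have h2 := Proves.exI (Γ := PA) (M.substAll (e3 (.var 0) (numeral e) (numeral k))) (numeral z)
    simp only [AFml.subst0, e3_sub, ATerm.substAll, subst0Env, num_sub] at h2
    exact t2 (by intro v; simp only [AFml.evalProp]; tauto) h (Proves.mp h2 hz)
  have hPcl : (P.subst0 (numeral e)).FreeLt 0 := by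
    refine free_sub P (c := 1) ?_ hP
    intro n hn
    obtain rfl : n = 0 := by omega
    exact num_free _ _
  have g2 : Proves PA (.imp (.neg (P.subst0 (numeral e))) (δ.subst0 (numeral k))) := by
    rw [hδk]
    have h := Proves.eqSubst (Γ := PA) (.neg P) (numeral e) (.var 1)
    have h' : P.subst0 (.var 1) = P.lift 0 := by
      rw [lift0_eq]
      refine sub_congr P (c := 1) ?_ hP
      intro n hn
      obtain rfl : n = 0 := by omega
      rfl
    have hn : ∀ t, (AFml.neg P).subst0 t = .neg (P.subst0 t) := fun t => rfl
    rw [hn, hn, h'] at h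
    have h1 : Proves PA (.all (.imp (M.substAll (e3 (.var 0) (.var 1) (numeral k)))
        (AFml.lift 0 (.imp (.neg (P.subst0 (numeral e))) (.neg P))))) := by
      simp only [AFml.lift, lift_closed hPcl]
      exact a2 (by intro v; simp only [AFml.evalProp]; tauto) hu (.gen h)
    have h2 : Proves PA (.all (.imp (.neg (P.subst0 (numeral e)))
        (.imp (.ex (M.substAll (e3 (.var 0) (.var 1) (numeral k)))) (.neg P)))) :=
      .gen (t1 (by intro v; simp only [AFml.evalProp]; tauto) (exE h1))
    have h3 := Proves.vacAll (Γ := PA) (.neg (P.subst0 (numeral e)))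
    rw [lift_closed (φ := .neg (P.subst0 (numeral e))) hPcl] at h3
    exact t2 (by intro v; simp only [AFml.evalProp]; tauto) (Proves.mp (.allImp _ _) h2) h3
  exact t4 (by intro v; simp only [AFml.evalProp, iffF]; tauto) f1 f2 g1 g2

/-- The interpretation sending every variable to `φ`. -/
def interp (P φ : AFml) : MFml → AFml
  | .var _ => φ
  | .bot => botFml
  | .neg A => .neg (interp P φ A)
  | .and A B => .and (interp P φ A) (interp P φ B)
  | .or A B => .or (interp P φ A) (interp P φ B)
  | .imp A B => .imp (interp P φ A) (interp P φ B)
  | .box A => P.appNum (interp P φ A)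

theorem interp_boxIter (P φ : AFml) (n : ℕ) :
    interp P φ (boxIter n (.var 0)) = iterPred P n φ := by
  induction n with
  | zero => rfl
  | succ n ih => rw [boxIter, interp, ih, iterPred]

/-- For each `n ≥ 1`, there exists no provability predicate `PR_T(x)` of `T`
such that the modal formula `□ⁿp → p` belongs to `PL(PR_T)`. -/
theorem statement_4 (Tax : Set AFml) (hext : PA ⊆ Tax)
    (hcons : ¬ Proves Tax botFml) (hpr : PrAxiomatized Tax)
    (n : ℕ) (hn : 1 ≤ n) :
    ¬ ∃ P : AFml, IsProvPred Tax P ∧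
        MFml.imp (boxIter n (.var 0)) (.var 0) ∈ PL Tax P := by
  rintro ⟨P, ⟨hPf, hP⟩, hPL⟩
  obtain ⟨m, rfl⟩ : ∃ m, n = m + 1 := ⟨n - 1, by omega⟩
  obtain ⟨φ, hφ, hfix⟩ := fixpoint P hPf m
  have hfix' := hfix.mono hext
  have href := hPL (interp P φ) ⟨fun _ => hφ, rfl, fun _ => rfl, fun _ _ => rfl, fun _ _ => rfl,
    fun _ _ => rfl, fun _ => rfl⟩
  rw [interp, interp_boxIter, interp] at href
  have h1 : Proves Tax φ :=
    t2 (by intro v; simp only [AFml.evalProp, iffF]; tauto) hfix' href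
  have h2 : ∀ j, Proves Tax (iterPred P j φ) := by
    intro j
    induction j with
    | zero => exact h1
    | succ j ih => exact ((hP _).1 ih).mono hext
  exact hcons (t3 (by intro v; simp only [AFml.evalProp, iffF]; tauto) hfix' h1 (h2 (m + 1)))

end PLN
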